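/- Let (X,ρ,μ) be a space of homogeneous type with quasi-triangle constant K₀ and doubling constant L, let 0 < q ≤ p < ∞, and let ω be an A₁(X)-weight. Then there exists a positive constant C, depending only on K₀, L, p, and q, such that for every s ∈ (0,1), every R ∈ (0,∞), and every measurable f with ‖f‖_{L^p_ω(X)} < ∞, one has s^{p/q} ∫_X (∫_{X∖B(x,R)} |f(y)|^q/(U(x,y)·ρ(x,y)^{sq}) dμ(y))^{p/q} ω(x) dμ(x) ≤ C·(s·2^{sq}/(R^{sq}(2^{sq}−1)))^{p/q}·[ω]²_{A₁(X)}·‖f‖^p_{L^p_ω(X)}. -/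

import Mathlib

/-!
The tail integral at `x` is dominated by the integral of `|f| ^ q` against a dyadic superposition of
averages over the balls `B(x, 2 ^ (k + 1) R)`, whose total mass is the geometric sum
`2 ^ (sq) / (R ^ (sq) (2 ^ (sq) - 1))`. Jensen's inequality for this measure replaces the exponent
`q` by `p` inside the average, so it remains to bound `∫ (⨍_{B(x, t)} |f| ^ p) ω(x) dx` uniformly
in `t`. By duality this amounts to bounding the averages of `ω` at scale `t`, which by the `A₁`
condition are almost everywhere at most a multiple of `[ω] ω`.

Nothing guarantees that `(x, y) ↦ 1_{ρ(x, y) < t}` is jointly measurable, so Tonelli's theorem does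
not apply to the average directly. Instead it is first dominated by a discrete average attached to a
countable cover by balls of radius `t`.
-/

noncomputable section

open MeasureTheory Filter Set
open scoped ENNReal NNReal Topology

namespace Paper

variable {X : Type*} [MeasurableSpace X]

/-- The ball with center `x` and radius `r` for the quasi-metric `ρ`. -/
def ball (ρ : X → X → ℝ) (x : X) (r : ℝ) : Set X := {y | ρ x y < r}

/-- `(X, ρ, μ)` is a quasi-metric measure space with quasi-triangle constant `K₀`:
`ρ` is a quasi-metric with constant `K₀` and all `ρ`-balls are `μ`-measurable. -/
structure IsQuasiMetricMeasure (ρ : X → X → ℝ) (μ : Measure X) (K₀ : ℝ) : Prop where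
  nonneg : ∀ x y, 0 ≤ ρ x y
  eq_zero_iff : ∀ x y, ρ x y = 0 ↔ x = y
  symm : ∀ x y, ρ x y = ρ y x
  one_le : 1 ≤ K₀
  triangle : ∀ x y z, ρ x z ≤ K₀ * (ρ x y + ρ y z)
  measurableSet_ball : ∀ x r, MeasurableSet (ball ρ x r)

/-- The doubling condition for `μ` with doubling constant `L ∈ [1, ∞)`:
`0 < μ(B(x,2r)) ≤ L · μ(B(x,r)) < ∞` for all `x` and `r > 0`. -/
def IsDoubling (ρ : X → X → ℝ) (μ : Measure X) (L : ℝ≥0∞) : Prop :=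
  1 ≤ L ∧ L < ∞ ∧ ∀ (x : X) (r : ℝ), 0 < r →
    0 < μ (ball ρ x r) ∧ μ (ball ρ x (2 * r)) ≤ L * μ (ball ρ x r) ∧ μ (ball ρ x r) < ∞

/-- `U(x,y) := min{μ(B(x,ρ(x,y))), μ(B(y,ρ(x,y)))}`. -/
def U (ρ : X → X → ℝ) (μ : Measure X) (x y : X) : ℝ≥0∞ :=
  min (μ (ball ρ x (ρ x y))) (μ (ball ρ y (ρ x y)))

/-- The `A₁(X)` characteristic of a weight `ω`. -/
def A1Const (ρ : X → X → ℝ) (μ : Measure X) (ω : X → ℝ≥0∞) : ℝ≥0∞ :=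
  ⨆ (x : X) (r : ℝ) (_ : 0 < r),
    ((∫⁻ y in ball ρ x r, ω y ∂μ) / μ (ball ρ x r)) /
      essInf ω (μ.restrict (ball ρ x r))

section ENNReal

theorem inv_le_mul_inv_of_le_mul {a b c : ℝ≥0∞} (hc₀ : c ≠ 0) (hc : c ≠ ∞) (h : a ≤ c * b) :
    b⁻¹ ≤ c * a⁻¹ := by
  rw [← div_eq_mul_inv, ENNReal.le_div_iff_mul_le (.inr hc₀) (.inr hc), mul_comm, ← div_eq_mul_inv]
  exact ENNReal.div_le_of_le_mul h

theorem tsum_inv_two_pow_mul_rpow {a R : ℝ} (ha : 0 < a) (hR : 0 < R) :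
    ∑' k : ℕ, (ENNReal.ofReal (2 ^ k * R) ^ a)⁻¹ =
      ENNReal.ofReal ((2 : ℝ) ^ a / (R ^ a * ((2 : ℝ) ^ a - 1))) := by
  have one_lt : 1 < (2 : ℝ) ^ a := Real.one_lt_rpow one_lt_two ha
  have term_eq (k : ℕ) : (ENNReal.ofReal (2 ^ k * R) ^ a)⁻¹ =
      ENNReal.ofReal ((R ^ a)⁻¹ * ((2 : ℝ) ^ a)⁻¹ ^ k) := by
    rw [ENNReal.ofReal_rpow_of_pos (by positivity), ← ENNReal.ofReal_inv_of_pos (by positivity),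
      Real.mul_rpow (by positivity) hR.le, ← Real.rpow_pow_comm zero_le_two, mul_inv_rev, inv_pow]
  have hasSum : HasSum (fun k : ℕ => (R ^ a)⁻¹ * ((2 : ℝ) ^ a)⁻¹ ^ k)
      ((R ^ a)⁻¹ * (1 - ((2 : ℝ) ^ a)⁻¹)⁻¹) :=
    (hasSum_geometric_of_lt_one (by positivity) (inv_lt_one_of_one_lt₀ one_lt)).mul_left _
  rw [tsum_congr term_eq, ← ENNReal.ofReal_tsum_of_nonneg (fun k => by positivity) hasSum.summable,
    hasSum.tsum_eq]
  congr 1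
  have : (2 : ℝ) ^ a - 1 ≠ 0 := by linarith
  field_simp

end ENNReal

section Measure

variable {μ : Measure X}

theorem rpow_lintegral_le_measure_univ_rpow_mul {g : X → ℝ≥0∞} (hg : AEMeasurable g μ) {r : ℝ}
    (hr : 1 ≤ r) : (∫⁻ y, g y ∂μ) ^ r ≤ μ univ ^ (r - 1) * ∫⁻ y, g y ^ r ∂μ := by
  have hr₀ : 0 < r := by linarith
  have h := eLpNorm'_le_eLpNorm'_mul_rpow_measure_univ (μ := μ) one_pos hr
    hg.aestronglyMeasurable
  simp only [eLpNorm', enorm_eq_self, ENNReal.rpow_one, div_one] at h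
  calc (∫⁻ y, g y ∂μ) ^ r
      ≤ ((∫⁻ y, g y ^ r ∂μ) ^ (1 / r) * μ univ ^ (1 - 1 / r)) ^ r := by gcongr
    _ = μ univ ^ (r - 1) * ∫⁻ y, g y ^ r ∂μ := by
        rw [ENNReal.mul_rpow_of_nonneg _ _ hr₀.le, ← ENNReal.rpow_mul, ← ENNReal.rpow_mul,
          one_div_mul_cancel hr₀.ne', ENNReal.rpow_one, sub_mul, one_div_mul_cancel hr₀.ne',
          one_mul, mul_comm]

theorem essInf_mul_measure_univ_le_lintegral (ω : X → ℝ≥0∞) :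
    essInf ω μ * μ univ ≤ ∫⁻ x, ω x ∂μ :=
  (lintegral_const _).symm.trans_le (lintegral_mono_ae ae_essInf_le)

theorem setLAverage_le_mul_setLAverage {s t : Set X} {c : ℝ≥0∞} (hc₀ : c ≠ 0) (hc : c ≠ ∞)
    (hst : s ⊆ t) (hμ : μ t ≤ c * μ s) (h : X → ℝ≥0∞) :
    ⨍⁻ y in s, h y ∂μ ≤ c * ⨍⁻ y in t, h y ∂μ := by
  simp only [setLAverage_eq, div_eq_mul_inv]
  calc (∫⁻ y in s, h y ∂μ) * (μ s)⁻¹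
      ≤ (∫⁻ y in t, h y ∂μ) * (c * (μ t)⁻¹) := by
        gcongr
        exact inv_le_mul_inv_of_le_mul hc₀ hc hμ
    _ = c * ((∫⁻ y in t, h y ∂μ) * (μ t)⁻¹) := by ring

/-- The averaging operator sending `h` to the function which on each `E i` takes the mean value of
`h` over `B i`. It is used with the `E i` pairwise disjoint, where the sum has one nonzero term. -/
def blockAverage {ι : Type*} (μ : Measure X) (E B : ι → Set X) (h : X → ℝ≥0∞) (x : X) : ℝ≥0∞ :=
  ∑' i, (E i).indicator (fun _ => ⨍⁻ y in B i, h y ∂μ) x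

section BlockAverage

variable {ι : Type*} {E B : ι → Set X}

theorem setLAverage_le_blockAverage {i : ι} {x : X} (hx : x ∈ E i) (h : X → ℝ≥0∞) :
    ⨍⁻ y in B i, h y ∂μ ≤ blockAverage μ E B h x :=
  calc ⨍⁻ y in B i, h y ∂μ = (E i).indicator (fun _ => ⨍⁻ y in B i, h y ∂μ) x :=
        (indicator_of_mem hx (fun _ => ⨍⁻ y in B i, h y ∂μ)).symm
    _ ≤ blockAverage μ E B h x := ENNReal.le_tsum i

variable [Countable ι]

theorem measurable_blockAverage (hE : ∀ i, MeasurableSet (E i)) (h : X → ℝ≥0∞) :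
    Measurable (blockAverage μ E B h) :=
  Measurable.tsum fun i => measurable_const.indicator (hE i)

theorem lintegral_blockAverage_mul (hE : ∀ i, MeasurableSet (E i)) (hB : ∀ i, MeasurableSet (B i))
    {h ω : X → ℝ≥0∞} (hh : Measurable h) (hω : Measurable ω) :
    ∫⁻ x, blockAverage μ E B h x * ω x ∂μ =
      ∫⁻ y, h y * ∑' i, (B i).indicator (fun _ => (∫⁻ x in E i, ω x ∂μ) / μ (B i)) y ∂μ := by
  simp_rw [blockAverage, ← ENNReal.tsum_mul_right, ← ENNReal.tsum_mul_left]
  rw [lintegral_tsum fun i => ((measurable_const.indicator (hE i)).fun_mul hω).aemeasurable,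
    lintegral_tsum fun i => (hh.fun_mul (measurable_const.indicator (hB i))).aemeasurable]
  refine tsum_congr fun i => ?_
  simp_rw [← indicator_mul_left, ← indicator_mul_right]
  rw [lintegral_indicator (hE i), lintegral_indicator (hB i), lintegral_const_mul _ hω,
    lintegral_mul_const _ hh, setLAverage_eq]
  simp only [div_eq_mul_inv]
  ring

theorem lintegral_blockAverage_mul_le (hE : ∀ i, MeasurableSet (E i))
    (hB : ∀ i, MeasurableSet (B i)) {h ω : X → ℝ≥0∞} (hh : Measurable h) (hω : Measurable ω)
    {c : ℝ≥0∞} (hc : ∀ᵐ y ∂μ,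
      ∑' i, (B i).indicator (fun _ => (∫⁻ x in E i, ω x ∂μ) / μ (B i)) y ≤ c * ω y) :
    ∫⁻ x, blockAverage μ E B h x * ω x ∂μ ≤ c * ∫⁻ y, h y * ω y ∂μ := by
  rw [lintegral_blockAverage_mul hE hB hh hω, ← lintegral_const_mul _ (hh.fun_mul hω)]
  refine lintegral_mono_ae ?_
  filter_upwards [hc] with y hy
  calc h y * ∑' i, (B i).indicator (fun _ => (∫⁻ x in E i, ω x ∂μ) / μ (B i)) y
      ≤ h y * (c * ω y) := by gcongr
    _ = c * (h y * ω y) := mul_left_comm _ _ _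

theorem tsum_indicator_setLIntegral_div_le (hE : ∀ i, MeasurableSet (E i))
    (hdisj : Pairwise (Function.onFun Disjoint E)) {c : ℝ≥0∞} (hc₀ : c ≠ 0) (hc : c ≠ ∞) {y : X}
    {D : Set X} (hD : ∀ i, y ∈ B i → E i ⊆ D ∧ μ D ≤ c * μ (B i)) (ω : X → ℝ≥0∞) :
    ∑' i, (B i).indicator (fun _ => (∫⁻ x in E i, ω x ∂μ) / μ (B i)) y ≤
      c * ⨍⁻ x in D, ω x ∂μ := by
  have term_le (i : ι) : (B i).indicator (fun _ => (∫⁻ x in E i, ω x ∂μ) / μ (B i)) y ≤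
      c * (μ D)⁻¹ * ∫⁻ x in E i, ω x ∂μ.restrict D := by
    by_cases hy : y ∈ B i
    swap
    · simp [hy]
    obtain ⟨hED, hμ⟩ := hD i hy
    rw [indicator_of_mem hy, Measure.restrict_restrict_of_subset hED, ENNReal.div_eq_inv_mul]
    gcongr
    exact inv_le_mul_inv_of_le_mul hc₀ hc hμ
  calc ∑' i, (B i).indicator (fun _ => (∫⁻ x in E i, ω x ∂μ) / μ (B i)) y
      ≤ ∑' i, c * (μ D)⁻¹ * ∫⁻ x in E i, ω x ∂μ.restrict D := ENNReal.tsum_le_tsum term_le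
    _ = c * (μ D)⁻¹ * ∫⁻ x in ⋃ i, E i, ω x ∂μ.restrict D := by
        rw [ENNReal.tsum_mul_left, lintegral_iUnion hE hdisj]
    _ ≤ c * (μ D)⁻¹ * ∫⁻ x in D, ω x ∂μ := by
        rw [Measure.restrict_restrict (.iUnion hE)]
        gcongr
        exact inter_subset_right
    _ = c * ⨍⁻ x in D, ω x ∂μ := by
        rw [setLAverage_eq, ENNReal.div_eq_inv_mul, mul_assoc]

end BlockAverage

end Measure

section HomogeneousType

variable {ρ : X → X → ℝ} {μ : Measure X} {K₀ : ℝ} {L : ℝ≥0∞}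

theorem IsQuasiMetricMeasure.ball_subset_ball (hρ : IsQuasiMetricMeasure ρ μ K₀) {x y : X}
    {r r' : ℝ} (h : K₀ * (ρ x y + r) ≤ r') : ball ρ x r ⊆ ball ρ y r' := by
  intro z (hz : ρ x z < r)
  have hK : 0 < K₀ := one_pos.trans_le hρ.one_le
  calc ρ y z ≤ K₀ * (ρ y x + ρ x z) := hρ.triangle y x z
    _ < K₀ * (ρ x y + r) := by rw [hρ.symm y x]; gcongr
    _ ≤ r' := h

namespace IsDoubling

theorem measure_ball_ne_zero (hL : IsDoubling ρ μ L) (x : X) {r : ℝ} (hr : 0 < r) :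
    μ (ball ρ x r) ≠ 0 :=
  (hL.2.2 x r hr).1.ne'

theorem measure_ball_ne_top (hL : IsDoubling ρ μ L) (x : X) {r : ℝ} (hr : 0 < r) :
    μ (ball ρ x r) ≠ ∞ :=
  (hL.2.2 x r hr).2.2.ne

theorem measure_ball_two_pow_mul_le (hL : IsDoubling ρ μ L) (n : ℕ) (x : X) {r : ℝ} (hr : 0 < r) :
    μ (ball ρ x (2 ^ n * r)) ≤ L ^ n * μ (ball ρ x r) := by
  induction n with
  | zero => simp
  | succ n ih =>
    calc μ (ball ρ x (2 ^ (n + 1) * r)) = μ (ball ρ x (2 * (2 ^ n * r))) := by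
          rw [pow_succ', mul_assoc]
      _ ≤ L * μ (ball ρ x (2 ^ n * r)) := (hL.2.2 x _ (by positivity)).2.1
      _ ≤ L * (L ^ n * μ (ball ρ x r)) := by gcongr
      _ = L ^ (n + 1) * μ (ball ρ x r) := by rw [pow_succ', mul_assoc]

theorem measure_ball_le_pow_ceil_mul (hL : IsDoubling ρ μ L) (hρ : IsQuasiMetricMeasure ρ μ K₀)
    {x y : X} {r r' M : ℝ} (hr : 0 < r) (h : K₀ * (ρ y x + r') ≤ M * r) :
    μ (ball ρ y r') ≤ L ^ ⌈M⌉₊ * μ (ball ρ x r) := by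
  have hM : M ≤ 2 ^ ⌈M⌉₊ :=
    (Nat.le_ceil M).trans (by exact_mod_cast Nat.lt_two_pow_self.le)
  have hsub : ball ρ y r' ⊆ ball ρ x (2 ^ ⌈M⌉₊ * r) :=
    hρ.ball_subset_ball (h.trans (by gcongr))
  exact (measure_mono hsub).trans (hL.measure_ball_two_pow_mul_le _ x hr)

theorem sigmaFinite [Nonempty X] (hL : IsDoubling ρ μ L) : SigmaFinite μ := by
  obtain ⟨x⟩ := ‹Nonempty X›
  refine ⟨⟨⟨fun n : ℕ => ball ρ x (n + 1), fun _ => trivial,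
    fun n => (hL.measure_ball_ne_top x (by positivity)).lt_top, eq_univ_of_forall fun y => ?_⟩⟩⟩
  obtain ⟨n, hn⟩ := exists_nat_gt (ρ x y)
  exact mem_iUnion.2 ⟨n, hn.trans (lt_add_one _)⟩

theorem exists_seq_forall_exists_lt [Nonempty X] (hL : IsDoubling ρ μ L)
    (hρ : IsQuasiMetricMeasure ρ μ K₀) {t : ℝ} (ht : 0 < t) :
    ∃ c : ℕ → X, ∀ y, ∃ i, ρ (c i) y < t := by
  have := hL.sigmaFinite
  have hK : 0 < K₀ := one_pos.trans_le hρ.one_le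
  have hδ : 0 < t / (2 * K₀) := by positivity
  let b (x : X) : Set X := ball ρ x (t / (2 * K₀))
  have hb_ne (x : X) : (b x).Nonempty :=
    nonempty_of_measure_ne_zero (hL.measure_ball_ne_zero x hδ)
  obtain ⟨S, -, hS_disj, hS_meet⟩ := Vitali.exists_disjoint_subfamily_covering_enlargement b univ
    (fun _ => 0) 2 one_lt_two (fun _ _ => le_rfl) 0 (fun _ _ => le_rfl) (fun x _ => hb_ne x)
  have hS_countable : S.Countable := by
    have h := Measure.countable_meas_pos_of_disjoint_iUnion (μ := μ)
      (fun x : S => hρ.measurableSet_ball x _) hS_disj.subtype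
    simpa [pos_iff_ne_zero, hL.measure_ball_ne_zero _ hδ, countable_univ_iff] using h
  have hS_cover (y : X) : ∃ x ∈ S, ρ x y < t := by
    obtain ⟨x, hxS, ⟨z, hyz, hxz⟩, -⟩ := hS_meet y (mem_univ y)
    refine ⟨x, hxS, ?_⟩
    calc ρ x y ≤ K₀ * (ρ x z + ρ z y) := hρ.triangle x z y
      _ < K₀ * (t / (2 * K₀) + t / (2 * K₀)) := by
          rw [hρ.symm z y]
          exact mul_lt_mul_of_pos_left (add_lt_add hxz hyz) hK
      _ = t := by field_simp; norm_num
  have hS_ne : S.Nonempty :=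
    let ⟨x, hx, _⟩ := hS_cover (Classical.arbitrary X)
    ⟨x, hx⟩
  obtain ⟨c, rfl⟩ := hS_countable.exists_eq_range hS_ne
  exact ⟨c, fun y => by simpa using hS_cover y⟩

end IsDoubling

/-- A constant comparing the measures of balls of comparable radii whose centers are close. The
factor `5 * K₀ ^ 3` is the largest dilation that occurs, in
`IsDoubling.measure_ball_le_comparisonConst_mul`. -/
def comparisonConst (K₀ : ℝ) (L : ℝ≥0∞) : ℝ≥0∞ := L ^ ⌈5 * K₀ ^ 3⌉₊

namespace IsDoubling

theorem comparisonConst_ne_zero (hL : IsDoubling ρ μ L) (K₀ : ℝ) : comparisonConst K₀ L ≠ 0 :=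
  pow_ne_zero _ (one_pos.trans_le hL.1).ne'

theorem comparisonConst_ne_top (hL : IsDoubling ρ μ L) (K₀ : ℝ) : comparisonConst K₀ L ≠ ∞ :=
  ENNReal.pow_ne_top hL.2.1.ne

theorem measure_ball_le_comparisonConst_mul (hL : IsDoubling ρ μ L)
    (hρ : IsQuasiMetricMeasure ρ μ K₀) {x y : X} {r r' : ℝ} (hr : 0 < r)
    (hxy : ρ x y ≤ 2 * K₀ * r) (hr' : r' ≤ 3 * K₀ ^ 2 * r) :
    μ (ball ρ y r') ≤ comparisonConst K₀ L * μ (ball ρ x r) := by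
  have hK := hρ.one_le
  refine hL.measure_ball_le_pow_ceil_mul hρ hr ?_
  calc K₀ * (ρ y x + r') ≤ K₀ * (2 * K₀ * r + 3 * K₀ ^ 2 * r) := by rw [hρ.symm y x]; gcongr
    _ ≤ K₀ * (2 * K₀ ^ 2 * r + 3 * K₀ ^ 2 * r) := by gcongr; exact le_self_pow₀ hK two_ne_zero
    _ = 5 * K₀ ^ 3 * r := by ring

theorem setLAverage_ball_le_of_le (hL : IsDoubling ρ μ L) (hρ : IsQuasiMetricMeasure ρ μ K₀)
    {x z : X} {t : ℝ} (ht : 0 < t) (hzx : ρ z x ≤ t) (h : X → ℝ≥0∞) :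
    ⨍⁻ y in ball ρ x t, h y ∂μ ≤
      comparisonConst K₀ L * ⨍⁻ y in ball ρ z (2 * K₀ * t), h y ∂μ := by
  have hK := hρ.one_le
  have hK₂ : K₀ ≤ K₀ ^ 2 := le_self_pow₀ hK two_ne_zero
  refine setLAverage_le_mul_setLAverage (hL.comparisonConst_ne_zero K₀)
    (hL.comparisonConst_ne_top K₀) (hρ.ball_subset_ball ?_)
    (hL.measure_ball_le_comparisonConst_mul hρ ht ?_ ?_) h
  · rw [hρ.symm x z]
    calc K₀ * (ρ z x + t) ≤ K₀ * (t + t) := by gcongr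
      _ = 2 * K₀ * t := by ring
  · rw [hρ.symm x z]
    nlinarith
  · nlinarith

theorem tsum_indicator_ball_le (hL : IsDoubling ρ μ L) (hρ : IsQuasiMetricMeasure ρ μ K₀)
    {t : ℝ} (ht : 0 < t) (c : ℕ → X) (y : X) (ω : X → ℝ≥0∞) :
    ∑' i, (ball ρ (c i) (2 * K₀ * t)).indicator (fun _ =>
        (∫⁻ x in disjointed (fun j => ball ρ (c j) t) i, ω x ∂μ) /
          μ (ball ρ (c i) (2 * K₀ * t))) y ≤
      comparisonConst K₀ L * ⨍⁻ x in ball ρ y (3 * K₀ ^ 2 * t), ω x ∂μ := by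
  have hK := hρ.one_le
  refine tsum_indicator_setLIntegral_div_le
    (fun i => .disjointed (fun j => hρ.measurableSet_ball (c j) t) i) (disjoint_disjointed _)
    (hL.comparisonConst_ne_zero K₀) (hL.comparisonConst_ne_top K₀)
    (fun i (hi : ρ (c i) y < 2 * K₀ * t) => ⟨?_, ?_⟩) ω
  · refine (disjointed_subset _ i).trans (hρ.ball_subset_ball ?_)
    calc K₀ * (ρ (c i) y + t) ≤ K₀ * (2 * K₀ * t + K₀ * t) := by
          gcongr
          exact le_mul_of_one_le_left ht.le hK
      _ = 3 * K₀ ^ 2 * t := by ring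
  · have ht_le : t ≤ 2 * K₀ * t := by nlinarith
    exact hL.measure_ball_le_comparisonConst_mul hρ (by positivity)
      (hi.le.trans (by gcongr)) (by gcongr)

theorem measure_ball_le_comparisonConst_mul_U (hL : IsDoubling ρ μ L)
    (hρ : IsQuasiMetricMeasure ρ μ K₀) {x y : X} {r : ℝ} (hxy : 0 < ρ x y) (hr : r ≤ 2 * ρ x y) :
    μ (ball ρ x r) ≤ comparisonConst K₀ L * U ρ μ x y := by
  have hK := hρ.one_le
  have hK₂ : 1 ≤ K₀ ^ 2 := one_le_pow₀ hK
  rw [U, mul_min]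
  refine le_min (hL.measure_ball_le_comparisonConst_mul hρ hxy ?_ ?_)
    (hL.measure_ball_le_comparisonConst_mul hρ hxy ?_ ?_)
  · rw [(hρ.eq_zero_iff x x).2 rfl]
    positivity
  · nlinarith
  · rw [hρ.symm y x]
    nlinarith
  · nlinarith

end IsDoubling

section A1

variable {ω : X → ℝ≥0∞}

theorem A1Const_le_sq (ρ : X → X → ℝ) (μ : Measure X) (ω : X → ℝ≥0∞) :
    A1Const ρ μ ω ≤ A1Const ρ μ ω ^ 2 := by
  rcases eq_or_ne (A1Const ρ μ ω) 0 with h₀ | h₀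
  · simp [h₀]
  suffices one_le : 1 ≤ A1Const ρ μ ω from le_self_pow₀ one_le two_ne_zero
  obtain ⟨x, r, hr, hne⟩ : ∃ x r, ∃ _ : 0 < r,
      (∫⁻ y in ball ρ x r, ω y ∂μ) / μ (ball ρ x r) / essInf ω (μ.restrict (ball ρ x r)) ≠ 0 := by
    simpa only [A1Const, ne_eq, ENNReal.iSup_eq_zero, not_forall] using h₀
  obtain ⟨havg, hinf⟩ := ENNReal.div_ne_zero.1 hne
  obtain ⟨hint, hB⟩ := ENNReal.div_ne_zero.1 havg
  refine le_trans ?_ (le_iSup_of_le x (le_iSup₂_of_le r hr le_rfl))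
  rw [ENNReal.le_div_iff_mul_le (.inr havg) (.inl hinf), one_mul,
    ENNReal.le_div_iff_mul_le (.inr hint) (.inl hB), ← Measure.restrict_apply_univ]
  exact essInf_mul_measure_univ_le_lintegral ω

theorem ae_forall_mem_ball_setLAverage_le (hρ : IsQuasiMetricMeasure ρ μ K₀)
    (hA : A1Const ρ μ ω < ∞) {x : X} {r : ℝ} (hr : 0 < r) (hx : μ (ball ρ x r) ≠ 0)
    (hloc : ∫⁻ y in ball ρ x r, ω y ∂μ < ∞) :
    ∀ᵐ y ∂μ, y ∈ ball ρ x r → ⨍⁻ z in ball ρ x r, ω z ∂μ ≤ A1Const ρ μ ω * ω y := by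
  have essInf_ne_top : essInf ω (μ.restrict (ball ρ x r)) ≠ ∞ := by
    intro h
    have := (essInf_mul_measure_univ_le_lintegral ω).trans_lt hloc
    simp [h, ENNReal.top_mul, hx] at this
  have le_A1 : (⨍⁻ z in ball ρ x r, ω z ∂μ) / essInf ω (μ.restrict (ball ρ x r)) ≤
      A1Const ρ μ ω := by
    rw [setLAverage_eq]
    exact le_iSup_of_le x (le_iSup₂_of_le r hr le_rfl)
  rw [ENNReal.div_le_iff_le_mul (.inr hA.ne) (.inl essInf_ne_top)] at le_A1
  filter_upwards [(ae_restrict_iff' (hρ.measurableSet_ball x r)).1 (ae_essInf_le (f := ω))]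
    with y hy hyB
  exact le_A1.trans (by gcongr; exact hy hyB)

theorem ae_setLAverage_ball_le [Nonempty X] (hρ : IsQuasiMetricMeasure ρ μ K₀)
    (hL : IsDoubling ρ μ L) (hA : A1Const ρ μ ω < ∞)
    (hloc : ∀ (x : X) (r : ℝ), 0 < r → ∫⁻ y in ball ρ x r, ω y ∂μ < ∞) {t : ℝ} (ht : 0 < t) :
    ∀ᵐ y ∂μ, ⨍⁻ z in ball ρ y t, ω z ∂μ ≤ comparisonConst K₀ L * A1Const ρ μ ω * ω y := by
  have hK := hρ.one_le
  have hr : 0 < 2 * K₀ * t := by positivity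
  obtain ⟨c, hc⟩ := hL.exists_seq_forall_exists_lt hρ ht
  have hae := ae_all_iff.2 fun i => ae_forall_mem_ball_setLAverage_le hρ hA hr
    (hL.measure_ball_ne_zero (c i) hr) (hloc (c i) _ hr)
  filter_upwards [hae] with y hy
  obtain ⟨i, hi⟩ := hc y
  calc ⨍⁻ z in ball ρ y t, ω z ∂μ
      ≤ comparisonConst K₀ L * ⨍⁻ z in ball ρ (c i) (2 * K₀ * t), ω z ∂μ :=
        hL.setLAverage_ball_le_of_le hρ ht hi.le ω
    _ ≤ comparisonConst K₀ L * (A1Const ρ μ ω * ω y) := by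
        gcongr
        exact hy i (hi.trans_le (by nlinarith))
    _ = comparisonConst K₀ L * A1Const ρ μ ω * ω y := (mul_assoc _ _ _).symm

theorem exists_measurable_setLAverage_ball_le [Nonempty X] (hρ : IsQuasiMetricMeasure ρ μ K₀)
    (hL : IsDoubling ρ μ L) (hω : Measurable ω)
    (hloc : ∀ (x : X) (r : ℝ), 0 < r → ∫⁻ y in ball ρ x r, ω y ∂μ < ∞)
    (hA : A1Const ρ μ ω < ∞) {h : X → ℝ≥0∞} (hh : Measurable h) {t : ℝ} (ht : 0 < t) :
    ∃ H : X → ℝ≥0∞, Measurable H ∧ (∀ x, ⨍⁻ y in ball ρ x t, h y ∂μ ≤ H x) ∧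
      ∫⁻ x, H x * ω x ∂μ ≤
        comparisonConst K₀ L ^ 3 * A1Const ρ μ ω * ∫⁻ y, h y * ω y ∂μ := by
  have hK := hρ.one_le
  obtain ⟨c, hc⟩ := hL.exists_seq_forall_exists_lt hρ ht
  let E : ℕ → Set X := disjointed fun i => ball ρ (c i) t
  let B (i : ℕ) : Set X := ball ρ (c i) (2 * K₀ * t)
  have hE (i : ℕ) : MeasurableSet (E i) :=
    .disjointed (fun i => hρ.measurableSet_ball (c i) t) i
  have hB (i : ℕ) : MeasurableSet (B i) := hρ.measurableSet_ball (c i) _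
  refine ⟨fun x => comparisonConst K₀ L * blockAverage μ E B h x,
    (measurable_blockAverage hE h).const_mul _, fun x => ?_, ?_⟩
  · obtain ⟨i, hi⟩ : ∃ i, x ∈ E i := by
      rw [← mem_iUnion, iUnion_disjointed]
      exact mem_iUnion.2 (hc x)
    have hxi : ρ (c i) x < t := disjointed_subset _ i hi
    exact (hL.setLAverage_ball_le_of_le hρ ht hxi.le h).trans
      (mul_le_mul_right (setLAverage_le_blockAverage (B := B) hi h) _)
  · have sum_le : ∀ᵐ y ∂μ, ∑' i, (B i).indicator (fun _ => (∫⁻ x in E i, ω x ∂μ) / μ (B i)) y ≤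
        comparisonConst K₀ L ^ 2 * A1Const ρ μ ω * ω y := by
      filter_upwards [ae_setLAverage_ball_le hρ hL hA hloc (t := 3 * K₀ ^ 2 * t) (by positivity)]
        with y hy
      calc ∑' i, (B i).indicator (fun _ => (∫⁻ x in E i, ω x ∂μ) / μ (B i)) y
          ≤ comparisonConst K₀ L * ⨍⁻ x in ball ρ y (3 * K₀ ^ 2 * t), ω x ∂μ :=
            hL.tsum_indicator_ball_le hρ ht c y ω
        _ ≤ comparisonConst K₀ L * (comparisonConst K₀ L * A1Const ρ μ ω * ω y) := by gcongr
        _ = comparisonConst K₀ L ^ 2 * A1Const ρ μ ω * ω y := by ring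
    simp only [mul_assoc (comparisonConst K₀ L) (blockAverage μ E B h _)]
    calc ∫⁻ x, comparisonConst K₀ L * (blockAverage μ E B h x * ω x) ∂μ
        = comparisonConst K₀ L * ∫⁻ x, blockAverage μ E B h x * ω x ∂μ :=
          lintegral_const_mul _ ((measurable_blockAverage hE h).mul hω)
      _ ≤ comparisonConst K₀ L *
            (comparisonConst K₀ L ^ 2 * A1Const ρ μ ω * ∫⁻ y, h y * ω y ∂μ) :=
          mul_le_mul_right (lintegral_blockAverage_mul_le hE hB hh hω sum_le) _
      _ = comparisonConst K₀ L ^ 3 * A1Const ρ μ ω * ∫⁻ y, h y * ω y ∂μ := by ring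

end A1

section Dyadic

/-- The superposition over `k` of the uniform probability measures on the balls
`B(x, 2 ^ (k + 1) R)`, with weights `(2 ^ k R) ^ (-a)`. -/
def dyadicMeasure (ρ : X → X → ℝ) (μ : Measure X) (R a : ℝ) (x : X) : Measure X :=
  Measure.sum fun k : ℕ => ((ENNReal.ofReal (2 ^ k * R) ^ a)⁻¹ *
    (μ (ball ρ x (2 ^ (k + 1) * R)))⁻¹) • μ.restrict (ball ρ x (2 ^ (k + 1) * R))

variable {R a : ℝ}

theorem lintegral_dyadicMeasure (x : X) (g : X → ℝ≥0∞) :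
    ∫⁻ y, g y ∂dyadicMeasure ρ μ R a x = ∑' k : ℕ, (ENNReal.ofReal (2 ^ k * R) ^ a)⁻¹ *
      ⨍⁻ y in ball ρ x (2 ^ (k + 1) * R), g y ∂μ := by
  simp only [dyadicMeasure, lintegral_sum_measure, lintegral_smul_measure, setLAverage_eq,
    ENNReal.div_eq_inv_mul, smul_eq_mul, mul_assoc]

theorem lintegral_dyadicMeasure_eq_lintegral_mul (hρ : IsQuasiMetricMeasure ρ μ K₀) (x : X)
    {g : X → ℝ≥0∞} (hg : Measurable g) :
    ∫⁻ y, g y ∂dyadicMeasure ρ μ R a x =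
      ∫⁻ y, g y * ∑' k : ℕ, (ball ρ x (2 ^ (k + 1) * R)).indicator (fun _ =>
        (ENNReal.ofReal (2 ^ k * R) ^ a)⁻¹ * (μ (ball ρ x (2 ^ (k + 1) * R)))⁻¹) y ∂μ := by
  have hB (k : ℕ) : MeasurableSet (ball ρ x (2 ^ (k + 1) * R)) := hρ.measurableSet_ball x _
  simp_rw [← ENNReal.tsum_mul_left]
  rw [dyadicMeasure, lintegral_sum_measure,
    lintegral_tsum fun k => (hg.fun_mul (measurable_const.indicator (hB k))).aemeasurable]
  refine tsum_congr fun k => ?_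
  simp_rw [← indicator_mul_right]
  rw [lintegral_indicator (hB k), lintegral_mul_const _ hg, lintegral_smul_measure, smul_eq_mul,
    mul_comm]

theorem dyadicMeasure_univ (hL : IsDoubling ρ μ L) (ha : 0 < a) (hR : 0 < R) (x : X) :
    dyadicMeasure ρ μ R a x univ =
      ENNReal.ofReal ((2 : ℝ) ^ a / (R ^ a * ((2 : ℝ) ^ a - 1))) := by
  rw [← lintegral_one, lintegral_dyadicMeasure, ← tsum_inv_two_pow_mul_rpow ha hR]
  refine tsum_congr fun k => ?_
  have hr : 0 < 2 ^ (k + 1) * R := by positivity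
  rw [setLAverage_one (hL.measure_ball_ne_zero x hr) (hL.measure_ball_ne_top x hr), mul_one]

theorem inv_U_mul_rpow_le_tsum (hρ : IsQuasiMetricMeasure ρ μ K₀) (hL : IsDoubling ρ μ L)
    (ha : 0 ≤ a) (hR : 0 < R) {x y : X} (hxy : R ≤ ρ x y) :
    (U ρ μ x y * ENNReal.ofReal (ρ x y) ^ a)⁻¹ ≤ comparisonConst K₀ L *
      ∑' k : ℕ, (ball ρ x (2 ^ (k + 1) * R)).indicator (fun _ =>
        (ENNReal.ofReal (2 ^ k * R) ^ a)⁻¹ * (μ (ball ρ x (2 ^ (k + 1) * R)))⁻¹) y := by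
  obtain ⟨k, hk_le, hk_lt⟩ := exists_nat_pow_near ((one_le_div hR).2 hxy) one_lt_two
  rw [le_div_iff₀ hR] at hk_le
  rw [div_lt_iff₀ hR] at hk_lt
  have hB₀ : μ (ball ρ x (2 ^ (k + 1) * R)) ≠ 0 := hL.measure_ball_ne_zero x (by positivity)
  have hB : μ (ball ρ x (2 ^ (k + 1) * R)) ≠ ∞ := hL.measure_ball_ne_top x (by positivity)
  calc (U ρ μ x y * ENNReal.ofReal (ρ x y) ^ a)⁻¹
      ≤ comparisonConst K₀ L *
          (ENNReal.ofReal (2 ^ k * R) ^ a * μ (ball ρ x (2 ^ (k + 1) * R)))⁻¹ := by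
        refine inv_le_mul_inv_of_le_mul (hL.comparisonConst_ne_zero K₀)
          (hL.comparisonConst_ne_top K₀) ?_
        rw [← mul_assoc, mul_comm]
        gcongr
        refine hL.measure_ball_le_comparisonConst_mul_U hρ (hR.trans_le hxy) ?_
        rw [pow_succ', mul_assoc]
        gcongr
    _ = comparisonConst K₀ L * (ball ρ x (2 ^ (k + 1) * R)).indicator (fun _ =>
          (ENNReal.ofReal (2 ^ k * R) ^ a)⁻¹ * (μ (ball ρ x (2 ^ (k + 1) * R)))⁻¹) y := by
        rw [ENNReal.mul_inv (.inr hB) (.inr hB₀), indicator_of_mem]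
        exact hk_lt
    _ ≤ _ := by
        gcongr
        exact ENNReal.le_tsum k

theorem setLIntegral_compl_ball_le_lintegral_dyadicMeasure (hρ : IsQuasiMetricMeasure ρ μ K₀)
    (hL : IsDoubling ρ μ L) (ha : 0 ≤ a) (hR : 0 < R) (x : X) {g : X → ℝ≥0∞} (hg : Measurable g) :
    ∫⁻ y in (ball ρ x R)ᶜ, g y / (U ρ μ x y * ENNReal.ofReal (ρ x y) ^ a) ∂μ ≤
      comparisonConst K₀ L * ∫⁻ y, g y ∂dyadicMeasure ρ μ R a x := by
  rw [lintegral_dyadicMeasure_eq_lintegral_mul hρ x hg,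
    ← lintegral_const_mul' _ _ (hL.comparisonConst_ne_top K₀)]
  refine (setLIntegral_mono' (hρ.measurableSet_ball x R).compl fun y hy => ?_).trans
    (setLIntegral_le_lintegral _ _)
  rw [div_eq_mul_inv, mul_left_comm]
  gcongr
  exact inv_U_mul_rpow_le_tsum hρ hL ha hR (not_lt.1 hy)

theorem rpow_setLIntegral_compl_ball_le (hρ : IsQuasiMetricMeasure ρ μ K₀)
    (hL : IsDoubling ρ μ L) (ha : 0 < a) (hR : 0 < R) {r : ℝ} (hr : 1 ≤ r) (x : X)
    {g : X → ℝ≥0∞} (hg : Measurable g) :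
    (∫⁻ y in (ball ρ x R)ᶜ, g y / (U ρ μ x y * ENNReal.ofReal (ρ x y) ^ a) ∂μ) ^ r ≤
      comparisonConst K₀ L ^ r *
        ENNReal.ofReal ((2 : ℝ) ^ a / (R ^ a * ((2 : ℝ) ^ a - 1))) ^ (r - 1) *
        ∫⁻ y, g y ^ r ∂dyadicMeasure ρ μ R a x := by
  have hr₀ : 0 ≤ r := by linarith
  calc (∫⁻ y in (ball ρ x R)ᶜ, g y / (U ρ μ x y * ENNReal.ofReal (ρ x y) ^ a) ∂μ) ^ r
      ≤ (comparisonConst K₀ L * ∫⁻ y, g y ∂dyadicMeasure ρ μ R a x) ^ r := by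
        gcongr
        exact setLIntegral_compl_ball_le_lintegral_dyadicMeasure hρ hL ha.le hR x hg
    _ = comparisonConst K₀ L ^ r * (∫⁻ y, g y ∂dyadicMeasure ρ μ R a x) ^ r :=
        ENNReal.mul_rpow_of_nonneg _ _ hr₀
    _ ≤ comparisonConst K₀ L ^ r * (dyadicMeasure ρ μ R a x univ ^ (r - 1) *
          ∫⁻ y, g y ^ r ∂dyadicMeasure ρ μ R a x) := by
        gcongr
        exact rpow_lintegral_le_measure_univ_rpow_mul hg.aemeasurable hr
    _ = _ := by rw [dyadicMeasure_univ hL ha hR, mul_assoc]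

theorem exists_measurable_lintegral_dyadicMeasure_le [Nonempty X]
    (hρ : IsQuasiMetricMeasure ρ μ K₀) (hL : IsDoubling ρ μ L) {ω : X → ℝ≥0∞} (hω : Measurable ω)
    (hloc : ∀ (x : X) (r : ℝ), 0 < r → ∫⁻ y in ball ρ x r, ω y ∂μ < ∞)
    (hA : A1Const ρ μ ω < ∞) (ha : 0 < a) (hR : 0 < R) {h : X → ℝ≥0∞} (hh : Measurable h) :
    ∃ H : X → ℝ≥0∞, Measurable H ∧ (∀ x, ∫⁻ y, h y ∂dyadicMeasure ρ μ R a x ≤ H x) ∧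
      ∫⁻ x, H x * ω x ∂μ ≤ ENNReal.ofReal ((2 : ℝ) ^ a / (R ^ a * ((2 : ℝ) ^ a - 1))) *
        (comparisonConst K₀ L ^ 3 * A1Const ρ μ ω * ∫⁻ y, h y * ω y ∂μ) := by
  choose H hH_meas hH_le hH_int using fun k : ℕ => exists_measurable_setLAverage_ball_le hρ hL hω
    hloc hA hh (t := 2 ^ (k + 1) * R) (by positivity)
  refine ⟨fun x => ∑' k : ℕ, (ENNReal.ofReal (2 ^ k * R) ^ a)⁻¹ * H k x,
    Measurable.tsum fun k => (hH_meas k).const_mul _, fun x => ?_, ?_⟩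
  · rw [lintegral_dyadicMeasure]
    exact ENNReal.tsum_le_tsum fun k => mul_le_mul_right (hH_le k x) _
  · simp_rw [← ENNReal.tsum_mul_right]
    rw [lintegral_tsum fun k => (((hH_meas k).const_mul _).fun_mul hω).aemeasurable,
      ← tsum_inv_two_pow_mul_rpow ha hR, ← ENNReal.tsum_mul_right]
    refine ENNReal.tsum_le_tsum fun k => ?_
    simp_rw [mul_assoc (_⁻¹)]
    rw [lintegral_const_mul _ ((hH_meas k).fun_mul hω)]
    gcongr
    exact hH_int k

end Dyadic

theorem lintegral_rpow_setLIntegral_compl_ball_le [Nonempty X]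
    (hρ : IsQuasiMetricMeasure ρ μ K₀) (hL : IsDoubling ρ μ L) {ω : X → ℝ≥0∞} (hω : Measurable ω)
    (hloc : ∀ (x : X) (r : ℝ), 0 < r → ∫⁻ y in ball ρ x r, ω y ∂μ < ∞)
    (hA : A1Const ρ μ ω < ∞) {a R r : ℝ} (ha : 0 < a) (hR : 0 < R) (hr : 1 ≤ r)
    {g : X → ℝ≥0∞} (hg : Measurable g) :
    ∫⁻ x, (∫⁻ y in (ball ρ x R)ᶜ, g y / (U ρ μ x y * ENNReal.ofReal (ρ x y) ^ a) ∂μ) ^ r *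
        ω x ∂μ ≤
      comparisonConst K₀ L ^ (r + 3) *
        ENNReal.ofReal ((2 : ℝ) ^ a / (R ^ a * ((2 : ℝ) ^ a - 1))) ^ r *
        A1Const ρ μ ω * ∫⁻ x, g x ^ r * ω x ∂μ := by
  obtain ⟨H, hH_meas, hH_le, hH_int⟩ := exists_measurable_lintegral_dyadicMeasure_le hρ hL hω hloc
    hA ha hR (hg.pow_const r)
  set A := ENNReal.ofReal ((2 : ℝ) ^ a / (R ^ a * ((2 : ℝ) ^ a - 1)))
  set D := comparisonConst K₀ L
  have hA_rpow : A ^ r = A ^ (r - 1) * A := by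
    calc A ^ r = A ^ (r - 1 + 1) := by rw [sub_add_cancel]
      _ = A ^ (r - 1) * A := by
          rw [ENNReal.rpow_add_of_nonneg _ _ (by linarith) zero_le_one, ENNReal.rpow_one]
  have hD_rpow : D ^ (r + 3) = D ^ r * D ^ 3 := by
    rw [ENNReal.rpow_add_of_nonneg _ _ (by positivity) (by positivity), ENNReal.rpow_ofNat]
  calc ∫⁻ x, (∫⁻ y in (ball ρ x R)ᶜ, g y / (U ρ μ x y * ENNReal.ofReal (ρ x y) ^ a) ∂μ) ^ r *
        ω x ∂μ
      ≤ ∫⁻ x, D ^ r * A ^ (r - 1) * (H x * ω x) ∂μ := by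
        refine lintegral_mono fun x => ?_
        rw [← mul_assoc]
        gcongr
        exact (rpow_setLIntegral_compl_ball_le hρ hL ha hR hr x hg).trans (by gcongr; exact hH_le x)
    _ = D ^ r * A ^ (r - 1) * ∫⁻ x, H x * ω x ∂μ := lintegral_const_mul _ (hH_meas.mul hω)
    _ ≤ D ^ r * A ^ (r - 1) * (A * (D ^ 3 * A1Const ρ μ ω * ∫⁻ x, g x ^ r * ω x ∂μ)) := by
        gcongr
    _ = D ^ (r + 3) * A ^ r * A1Const ρ μ ω * ∫⁻ x, g x ^ r * ω x ∂μ := by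
        rw [hA_rpow, hD_rpow]
        ring

end HomogeneousType

theorem statement2_general (K₀ : ℝ) (L : ℝ≥0∞) (p q : ℝ) (hq : 0 < q) (hqp : q ≤ p) :
    ∃ C : ℝ≥0, 0 < C ∧
      ∀ (Y : Type*) [MeasurableSpace Y] [Nonempty Y] (ρ : Y → Y → ℝ) (μ : Measure Y),
        IsQuasiMetricMeasure ρ μ K₀ → IsDoubling ρ μ L →
        ∀ ω : Y → ℝ≥0∞, Measurable ω →
        (∀ (x : Y) (r : ℝ), 0 < r → (∫⁻ y in ball ρ x r, ω y ∂μ) < ∞) →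
        A1Const ρ μ ω < ∞ →
        ∀ s R : ℝ, 0 < s → 0 < R →
        ∀ f : Y → ℝ≥0∞, Measurable f →
        ENNReal.ofReal s ^ (p / q) *
            (∫⁻ x, (∫⁻ y in (ball ρ x R)ᶜ, f y ^ q /
                (U ρ μ x y * ENNReal.ofReal (ρ x y) ^ (s * q)) ∂μ) ^ (p / q) * ω x ∂μ) ≤
          C * ENNReal.ofReal (s * (2 : ℝ) ^ (s * q) / (R ^ (s * q) * ((2 : ℝ) ^ (s * q) - 1)))
              ^ (p / q) *
            A1Const ρ μ ω * ∫⁻ x, f x ^ p * ω x ∂μ := by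
  have hr : 1 ≤ p / q := (one_le_div hq).2 hqp
  refine ⟨(comparisonConst K₀ L ^ (p / q + 3)).toNNReal + 1, by positivity, ?_⟩
  intro Y _ _ ρ μ hρ hL ω hω hloc hA s R hs hR f hf
  have hC : comparisonConst K₀ L ^ (p / q + 3) ≤
      ((comparisonConst K₀ L ^ (p / q + 3)).toNNReal + 1 : ℝ≥0) := by
    rw [ENNReal.coe_add, ENNReal.coe_toNNReal
      (ENNReal.rpow_ne_top_of_nonneg (by positivity) (hL.comparisonConst_ne_top K₀))]
    exact le_self_add
  have hfp (x : Y) : (f x ^ q) ^ (p / q) = f x ^ p := by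
    rw [← ENNReal.rpow_mul, mul_div_cancel₀ _ hq.ne']
  have key := lintegral_rpow_setLIntegral_compl_ball_le hρ hL hω hloc hA (mul_pos hs hq) hR hr
    (hf.pow_const q)
  simp_rw [hfp] at key
  rw [mul_div_assoc, ENNReal.ofReal_mul hs.le, ENNReal.mul_rpow_of_nonneg _ _ (by positivity)]
  refine (mul_le_mul_right key _).trans ?_
  set A := ENNReal.ofReal ((2 : ℝ) ^ (s * q) / (R ^ (s * q) * ((2 : ℝ) ^ (s * q) - 1)))
  calc ENNReal.ofReal s ^ (p / q) * (comparisonConst K₀ L ^ (p / q + 3) * A ^ (p / q) *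
        A1Const ρ μ ω * ∫⁻ x, f x ^ p * ω x ∂μ)
      = comparisonConst K₀ L ^ (p / q + 3) * (ENNReal.ofReal s ^ (p / q) * A ^ (p / q)) *
        A1Const ρ μ ω * ∫⁻ x, f x ^ p * ω x ∂μ := by ring
    _ ≤ _ := by gcongr

theorem statement2 (K₀ : ℝ) (L : ℝ≥0∞) (p q : ℝ) (hq : 0 < q) (hqp : q ≤ p) :
    ∃ C : ℝ≥0, 0 < C ∧
      ∀ (Y : Type*) [MeasurableSpace Y] [Nonempty Y] (ρ : Y → Y → ℝ) (μ : Measure Y),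
        IsQuasiMetricMeasure ρ μ K₀ → IsDoubling ρ μ L →
        ∀ ω : Y → ℝ≥0∞, Measurable ω →
        (∀ (x : Y) (r : ℝ), 0 < r → (∫⁻ y in ball ρ x r, ω y ∂μ) < ∞) →
        A1Const ρ μ ω < ∞ →
        ∀ s R : ℝ, s ∈ Set.Ioo (0:ℝ) 1 → 0 < R →
        ∀ f : Y → ℝ, Measurable f →
          (∫⁻ x, ENNReal.ofReal |f x| ^ p * ω x ∂μ) < ∞ →
        ENNReal.ofReal s ^ (p / q) *
            (∫⁻ x, (∫⁻ y in (ball ρ x R)ᶜ, ENNReal.ofReal |f y| ^ q /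
                (U ρ μ x y * ENNReal.ofReal (ρ x y) ^ (s * q)) ∂μ) ^ (p / q) * ω x ∂μ) ≤
          (C : ℝ≥0∞) *
            ENNReal.ofReal (s * (2:ℝ) ^ (s * q) / (R ^ (s * q) * ((2:ℝ) ^ (s * q) - 1)))
              ^ (p / q) *
            A1Const ρ μ ω ^ 2 * (∫⁻ x, ENNReal.ofReal |f x| ^ p * ω x ∂μ) := by
  obtain ⟨C, hC, h⟩ := statement2_general K₀ L p q hq hqp
  refine ⟨C, hC, fun Y _ _ ρ μ hρ hL ω hω hloc hA s R hs hR f hf _ =>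
    (h Y ρ μ hρ hL ω hω hloc hA s R hs.1 hR _ hf.abs.ennreal_ofReal).trans ?_⟩
  gcongr
  exact A1Const_le_sq ρ μ ω

end Paper
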